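/- Let D = ∩_{j=1}^N {x ∈ ℝ^d : ⟨v_j, x⟩ ≥ p_j} ⊆ ℝ^d be a convex polytope with unit normal vectors v_j, and let H_j = {x : ⟨v_j,x⟩ = p_j}. Fix 1 ≤ k ≤ d, indices j_1 < … < j_k in {1,…,N} with v_{j_1},…,v_{j_k} linearly independent, and reals 0 < δ_1 ≤ δ_2 ≤ … ≤ δ_k ≤ δ'. Let G := { x ∈ D : dist(x, H_{j_α}) ≥ δ_α for α = 1,…,k, and dist(x, H_j) ≥ δ' for all j ∉ {j_1,…,j_k} }. Then there exists an orthonormal basis e_1,…,e_d of ℝ^d such that: (i) for α = 1,…,k, e_α ∈ span{v_{j_1},…,v_{j_α}}, e_α ⊥ span{v_{j_1},…,v_{j_{α−1}}}, and ⟨e_α, v_{j_α}⟩ > 0; (ii) for α = k+1,…,d, e_α ⊥ span{v_{j_1},…,v_{j_k}}; and (iii) for every B > 0, every convex function f : D → ℝ with |f| ≤ B on D, every α ∈ {1,…,d} and all x, x+λe_α ∈ G, one has |f(x+λe_α) − f(x)| ≤ (2B/δ_α)|λ|, where δ_α := δ' for α > k. -/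

import Mathlib

open MeasureTheory Real

/-- The ε-bracketing number of a class `F` of real-valued functions, where brackets are
required to hold pointwise on `dom` and their size is measured by `size`. It is `⊤`
if no finite collection of brackets covers `F`. -/
noncomputable def bracketN {α : Type*} (ε : ℝ) (F : Set (α → ℝ)) (dom : Set α)
    (size : (α → ℝ) → ℝ) : ℕ∞ :=
  sInf {N : ℕ∞ | ∃ n : ℕ, (n : ℕ∞) = N ∧ ∃ l u : Fin n → α → ℝ,
    (∀ i, size (fun x => u i x - l i x) ≤ ε) ∧
    ∀ f ∈ F, ∃ i, ∀ x ∈ dom, l i x ≤ f x ∧ f x ≤ u i x}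

/-- The `L_p` size of a function over a domain `dom`, w.r.t. Lebesgue measure. -/
noncomputable def LpSize {d : ℕ} (p : ℝ) (dom : Set (EuclideanSpace ℝ (Fin d)))
    (g : EuclideanSpace ℝ (Fin d) → ℝ) : ℝ :=
  (∫ x in dom, |g x| ^ p) ^ (1 / p)

/-- The sup (`L_∞`) size of a function over a domain `dom`. -/
noncomputable def LinfSize {α : Type*} (dom : Set α) (g : α → ℝ) : ℝ :=
  sSup ((fun x => |g x|) '' dom)

/-- The class `C(D, B)` of convex functions on `D` bounded in absolute value by `B`. -/
def convexClass {d : ℕ} (D : Set (EuclideanSpace ℝ (Fin d))) (B : ℝ) :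
    Set (EuclideanSpace ℝ (Fin d) → ℝ) :=
  {f | ConvexOn ℝ D f ∧ ∀ x ∈ D, |f x| ≤ B}

/-- The class `C(D, B, Γ)` of convex functions on `D` bounded in absolute value by `B` and
with Lipschitz constant `Γ i` in the `i`-th coordinate direction. -/
def convexLipClass {d : ℕ} (D : Set (EuclideanSpace ℝ (Fin d))) (B : ℝ) (Γ : Fin d → ℝ) :
    Set (EuclideanSpace ℝ (Fin d) → ℝ) :=
  {f | ConvexOn ℝ D f ∧ (∀ x ∈ D, |f x| ≤ B) ∧
    ∀ i : Fin d, ∀ x ∈ D, ∀ l : ℝ, x + l • (EuclideanSpace.single i (1:ℝ)) ∈ D →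
      |f (x + l • EuclideanSpace.single i (1:ℝ)) - f x| ≤ Γ i * |l|}

/-- A convex function bounded by `B` on `D` increases by at most `2 * B / s` from `x` to `y` if the
segment from `x` to `y` can be prolonged beyond `y`, inside `D`, by `s` times its length. -/
theorem ConvexOn.sub_le_two_mul_div_of_extension_mem {E : Type*} [AddCommGroup E] [Module ℝ E]
    {D : Set E} {f : E → ℝ} {B : ℝ} (hf : ConvexOn ℝ D f) (hB : ∀ x ∈ D, |f x| ≤ B) {x y : E}
    (hx : x ∈ D) {s : ℝ} (hs : 0 < s) (hz : y + s • (y - x) ∈ D) :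
    f y - f x ≤ 2 * B / s := by
  have hs1 : 0 < 1 + s := by linarith
  have hconv := hf.2 hx hz (show 0 ≤ s / (1 + s) by positivity)
    (show 0 ≤ 1 / (1 + s) by positivity) (by field_simp; ring)
  have hy : (s / (1 + s)) • x + (1 / (1 + s)) • (y + s • (y - x)) = y := by
    match_scalars <;> field_simp <;> ring
  rw [hy, smul_eq_mul, smul_eq_mul] at hconv
  have hfx := abs_le.1 (hB x hx)
  have hfz := abs_le.1 (hB _ hz)
  have hB0 : 0 ≤ B := (abs_nonneg _).trans (hB x hx)
  calc f y - f x
      ≤ s / (1 + s) * f x + 1 / (1 + s) * f (y + s • (y - x)) - f x := by linarith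
    _ = (f (y + s • (y - x)) - f x) / (1 + s) := by field_simp; ring
    _ ≤ 2 * B / (1 + s) := by gcongr; linarith
    _ ≤ 2 * B / s := by gcongr; linarith

/-- A convex function bounded by `B` on `D` satisfies a Lipschitz bound with constant `2 * B / r`
along `e` between two points around which `D` contains the segments of radius `r` along `e`. -/
theorem ConvexOn.abs_sub_le_of_segments_subset {E : Type*} [AddCommGroup E] [Module ℝ E]
    {D : Set E} {f : E → ℝ} {B : ℝ} (hf : ConvexOn ℝ D f) (hB : ∀ x ∈ D, |f x| ≤ B) {x e : E}
    {r l : ℝ} (hr : 0 < r) (hx : ∀ t : ℝ, |t| ≤ r → x + t • e ∈ D)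
    (hy : ∀ t : ℝ, |t| ≤ r → x + l • e + t • e ∈ D) :
    |f (x + l • e) - f x| ≤ 2 * B / r * |l| := by
  rcases eq_or_ne l 0 with rfl | hl
  · simp
  have hl' : 0 < |l| := abs_pos.2 hl
  have hxD : x ∈ D := by simpa using hx 0 (by simpa using hr.le)
  have hyD : x + l • e ∈ D := by simpa using hy 0 (by simpa using hr.le)
  have hs : 0 < r / |l| := div_pos hr hl'
  have hconst : 2 * B / (r / |l|) = 2 * B / r * |l| := by field_simp
  have ht : |r / |l| * l| ≤ r := by
    rw [abs_mul, abs_of_pos hs, div_mul_cancel₀ _ hl'.ne']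
  rw [← hconst, abs_le']
  constructor
  · refine hf.sub_le_two_mul_div_of_extension_mem hB hxD hs ?_
    convert! hy (r / |l| * l) ht using 2
    module
  · rw [neg_sub]
    refine hf.sub_le_two_mul_div_of_extension_mem hB hyD hs ?_
    convert! hx (-(r / |l| * l)) (by rwa [abs_neg]) using 2
    module

section InnerProductSpace

variable {E : Type*} [NormedAddCommGroup E] [InnerProductSpace ℝ E]

/-- A point of the half-space `c ≤ ⟪v, x⟫` with unit normal `v` is at distance at most `⟪v, x⟫ - c`
from the bounding hyperplane. -/
theorem infDist_hyperplane_le {v : E} (hv : ‖v‖ = 1) {c : ℝ} {x : E} (hx : c ≤ inner ℝ v x) :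
    Metric.infDist x {y : E | inner ℝ v y = c} ≤ inner ℝ v x - c := by
  have hmem : x - (inner ℝ v x - c) • v ∈ {y : E | inner ℝ v y = c} := by
    simp [inner_sub_right, inner_smul_right, hv]
  refine (Metric.infDist_le_dist_of_mem hmem).trans_eq ?_
  rw [dist_eq_norm, sub_sub_cancel, norm_smul, hv, mul_one, Real.norm_of_nonneg (by linarith)]

/-- Moving by at most `r` along a unit vector does not leave a half-space with unit normal if the
direction is parallel to the bounding hyperplane or the point is at least `r` away from it. -/
theorem le_inner_add_smul_of_le_infDist {v e : E} (hv : ‖v‖ = 1) (he : ‖e‖ = 1) {c r t : ℝ}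
    {x : E} (hx : c ≤ inner ℝ v x) (ht : |t| ≤ r)
    (h : inner ℝ e v = 0 ∨ r ≤ Metric.infDist x {y : E | inner ℝ v y = c}) :
    c ≤ inner ℝ v (x + t • e) := by
  rw [inner_add_right, inner_smul_right]
  rcases h with h | h
  · rw [real_inner_comm e v, h]
    simpa using hx
  · have hdist := h.trans (infDist_hyperplane_le hv hx)
    have hinner : |inner ℝ v e| ≤ 1 := by simpa [hv, he] using abs_real_inner_le_norm v e
    have hle : |t * inner ℝ v e| ≤ |t| := by
      rw [abs_mul]
      exact mul_le_of_le_one_right (abs_nonneg t) hinner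
    linarith [(abs_le.1 hle).1]

/-- The Gram–Schmidt vector at `i` has squared norm `⟪gramSchmidt f i, f i⟫`. -/
theorem inner_gramSchmidt_self {ι : Type*} [LinearOrder ι] [LocallyFiniteOrderBot ι]
    [WellFoundedLT ι] (f : ι → E) (i : ι) :
    inner ℝ (InnerProductSpace.gramSchmidt ℝ f i) (f i) =
      ‖InnerProductSpace.gramSchmidt ℝ f i‖ ^ 2 := by
  conv_lhs => rw [InnerProductSpace.gramSchmidt_def'' ℝ f i]
  rw [inner_add_right, inner_sum, Finset.sum_eq_zero, add_zero, real_inner_self_eq_norm_sq]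
  intro m hm
  rw [inner_smul_right, InnerProductSpace.gramSchmidt_orthogonal ℝ f (Finset.mem_Iio.1 hm).ne',
    mul_zero]

/-- Linearly independent vectors `w 0, …, w (k - 1)` admit an orthonormal basis of the ambient
space whose first `k` vectors are obtained from them by Gram–Schmidt, the others being orthogonal
to all of them. -/
theorem exists_orthonormalBasis_adapted [FiniteDimensional ℝ E] {d k : ℕ}
    (hd : Module.finrank ℝ E = d) (hkd : k ≤ d) (w : Fin k → E) (hw : LinearIndependent ℝ w) :
    ∃ e : OrthonormalBasis (Fin d) ℝ E,
      (∀ α : Fin k, e (Fin.castLE hkd α) ∈ Submodule.span ℝ (w '' {β | β ≤ α}) ∧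
        (∀ β, β < α → inner ℝ (e (Fin.castLE hkd α)) (w β) = 0) ∧
        0 < inner ℝ (e (Fin.castLE hkd α)) (w α)) ∧
      ∀ α : Fin d, k ≤ (α : ℕ) → ∀ β, inner ℝ (e α) (w β) = 0 := by
  classical
  have hcard : Module.finrank ℝ E = Fintype.card (Fin d) := by simp [hd]
  let g : Fin d → E := fun i => if h : (i : ℕ) < k then w ⟨i, h⟩ else 0
  have hg (α : Fin k) : g (Fin.castLE hkd α) = w α := by simp [g]
  have hgs (α : Fin k) : InnerProductSpace.gramSchmidt ℝ g (Fin.castLE hkd α) ≠ 0 := by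
    apply InnerProductSpace.gramSchmidt_ne_zero_coe
    have hlt (i : Set.Iic (Fin.castLE hkd α)) : ((i : Fin d) : ℕ) < k :=
      lt_of_le_of_lt (Fin.le_def.1 i.2) α.2
    have hcomp : g ∘ ((↑) : Set.Iic (Fin.castLE hkd α) → Fin d) =
        w ∘ fun i : Set.Iic (Fin.castLE hkd α) => ⟨((i : Fin d) : ℕ), hlt i⟩ := by
      funext i
      simp [g, hlt i]
    rw [hcomp]
    refine hw.comp _ fun a b hab => ?_
    exact Subtype.ext (Fin.ext (Fin.mk.inj_iff.1 hab))
  have happly (α : Fin k) :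
      InnerProductSpace.gramSchmidtOrthonormalBasis hcard g (Fin.castLE hkd α) =
        ‖InnerProductSpace.gramSchmidt ℝ g (Fin.castLE hkd α)‖⁻¹ •
          InnerProductSpace.gramSchmidt ℝ g (Fin.castLE hkd α) := by
    rw [InnerProductSpace.gramSchmidtOrthonormalBasis_apply]
    · rfl
    · simpa [InnerProductSpace.gramSchmidtNormed] using hgs α
  refine ⟨InnerProductSpace.gramSchmidtOrthonormalBasis hcard g, fun α => ⟨?_, ?_, ?_⟩, ?_⟩
  · rw [happly]
    refine Submodule.smul_mem _ _ (Submodule.span_mono ?_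
      (InnerProductSpace.gramSchmidt_mem_span ℝ g le_rfl))
    rintro _ ⟨i, hi, rfl⟩
    have hik : (i : ℕ) < k := lt_of_le_of_lt (Fin.le_def.1 hi) α.2
    exact ⟨⟨i, hik⟩, Fin.le_def.1 hi, (hg ⟨i, hik⟩).symm⟩
  · intro β hβ
    rw [← hg β]
    exact InnerProductSpace.gramSchmidtOrthonormalBasis_inv_triangular hcard g hβ
  · rw [happly, ← hg α, real_inner_smul_left, inner_gramSchmidt_self]
    have := norm_pos_iff.2 (hgs α)
    positivity
  · intro α hα β
    rw [← hg β]
    exact InnerProductSpace.gramSchmidtOrthonormalBasis_inv_triangular hcard g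
      (Fin.lt_def.2 (lt_of_lt_of_le β.2 hα))

end InnerProductSpace

/-- **Proposition (adapted orthonormal basis and directional Lipschitz bounds).** For a
polytope `D = ∩ⱼ {⟨vⱼ,x⟩ ≥ pⱼ}` with unit normals, indices `j₁ < ⋯ < j_k` with
`v_{j₁},…,v_{j_k}` linearly independent, `0 < δ₁ ≤ ⋯ ≤ δ_k ≤ δ'`, and
`G = {x ∈ D : dist(x,H_{j_α}) ≥ δ_α, dist(x,H_j) ≥ δ' for j ∉ {j₁,…,j_k}}`, there is an
orthonormal basis `e₁,…,e_d` with the Gram–Schmidt properties (i)–(ii) such that every convex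
`f` with `|f| ≤ B` on `D` is `2B/δ_α`-Lipschitz along `e_α` within `G` (with `δ_α := δ'` for
`α > k`). -/
theorem adapted_basis_lipschitz (d N : ℕ) (hd : 1 ≤ d)
    (v : Fin N → EuclideanSpace ℝ (Fin d)) (hv : ∀ j, ‖v j‖ = 1) (c : Fin N → ℝ)
    (D : Set (EuclideanSpace ℝ (Fin d)))
    (hD : D = ⋂ j, {x : EuclideanSpace ℝ (Fin d) | c j ≤ inner ℝ (v j) x})
    (k : ℕ) (hk1 : 1 ≤ k) (hkd : k ≤ d)
    (j : Fin k → Fin N) (hj : StrictMono j)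
    (hind : LinearIndependent ℝ (fun β : Fin k => v (j β)))
    (δ : Fin k → ℝ) (δ' : ℝ) (hδpos : ∀ α, 0 < δ α)
    (hδmono : ∀ α β : Fin k, α ≤ β → δ α ≤ δ β) (hδ' : ∀ α, δ α ≤ δ')
    (G : Set (EuclideanSpace ℝ (Fin d)))
    (hG : G = {x ∈ D |
      (∀ α : Fin k,
        δ α ≤ Metric.infDist x {y : EuclideanSpace ℝ (Fin d) | (inner ℝ (v (j α)) y : ℝ) = c (j α)}) ∧
      ∀ j' : Fin N, j' ∉ Set.range j →
        δ' ≤ Metric.infDist x {y : EuclideanSpace ℝ (Fin d) | (inner ℝ (v j') y : ℝ) = c j'}}) :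
    ∃ e : Fin d → EuclideanSpace ℝ (Fin d), Orthonormal ℝ e ∧
      (∀ α : Fin k,
        e (Fin.castLE hkd α) ∈ Submodule.span ℝ ((fun β => v (j β)) '' {β : Fin k | β ≤ α}) ∧
        (∀ β : Fin k, β < α → (inner ℝ (e (Fin.castLE hkd α)) (v (j β)) : ℝ) = 0) ∧
        0 < (inner ℝ (e (Fin.castLE hkd α)) (v (j α)) : ℝ)) ∧
      (∀ α : Fin d, k ≤ (α : ℕ) → ∀ β : Fin k, (inner ℝ (e α) (v (j β)) : ℝ) = 0) ∧
      ∀ B : ℝ, 0 < B → ∀ f : EuclideanSpace ℝ (Fin d) → ℝ,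
        ConvexOn ℝ D f → (∀ x ∈ D, |f x| ≤ B) →
        ∀ α : Fin d, ∀ x ∈ G, ∀ l : ℝ, x + l • e α ∈ G →
          |f (x + l • e α) - f x| ≤
            (2 * B / (if h : (α : ℕ) < k then δ ⟨α, h⟩ else δ')) * |l| := by
  obtain ⟨e, he_low, he_high⟩ := exists_orthonormalBasis_adapted
    (by simp : Module.finrank ℝ (EuclideanSpace ℝ (Fin d)) = d) hkd (fun β => v (j β)) hind
  refine ⟨e, e.orthonormal, he_low, he_high, fun B _ f hf hfB α x hx l hxl => ?_⟩
  set r : ℝ := if h : (α : ℕ) < k then δ ⟨α, h⟩ else δ' with hr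
  have hδ'pos : 0 < δ' := (hδpos ⟨0, hk1⟩).trans_le (hδ' _)
  have hrpos : 0 < r := by
    rw [hr]
    split_ifs
    exacts [hδpos _, hδ'pos]
  have hrδ' : r ≤ δ' := by
    rw [hr]
    split_ifs
    exacts [hδ' _, le_rfl]
  have hparallel_or_far (β : Fin k) : inner ℝ (e α) (v (j β)) = 0 ∨ r ≤ δ β := by
    rcases lt_or_ge (α : ℕ) k with h | h
    · rcases lt_or_ge β ⟨α, h⟩ with hβ | hβ
      · exact Or.inl ((he_low ⟨α, h⟩).2.1 β hβ)
      · rw [hr, dif_pos h]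
        exact Or.inr (hδmono _ _ hβ)
    · exact Or.inl (he_high α h β)
  have hsegment (y) (hy : y ∈ G) (t : ℝ) (ht : |t| ≤ r) : y + t • e α ∈ D := by
    rw [hG] at hy
    obtain ⟨hyD, hyj, hyj'⟩ := hy
    rw [hD, Set.mem_iInter] at hyD ⊢
    intro i
    refine le_inner_add_smul_of_le_infDist (hv i) (e.orthonormal.1 α) (hyD i) ht ?_
    by_cases hi : i ∈ Set.range j
    · obtain ⟨β, rfl⟩ := hi
      exact (hparallel_or_far β).imp_right fun h => h.trans (hyj β)
    · exact Or.inr (hrδ'.trans (hyj' i hi))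
  exact hf.abs_sub_le_of_segments_subset hfB hrpos (hsegment x hx) (hsegment _ hxl)
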